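/- Let U be a nonempty bounded open subset of ℂ, let g : ℂ → ℂ be continuous on the closure of U and complex differentiable at every point of U, and let h : ℂ → ℂ be continuously differentiable in the real sense (C¹ as a function of two real variables). Then there exists a function u : ℂ → ℂ, continuous on all of ℂ, such that z ↦ g(z)·h(z) − u(z) is complex differentiable at every point of U, u is complex differentiable at every point of the complement of the closure of U, and u(z) tends to 0 as |z| → ∞. -/

import Mathlib

open Filter

/-!
The correction is the Cauchy transform `u` of `φ = 1_U ∂̄f`, where `f = g h`. Since `1/z` is the sum
of an integrable and a bounded function while `φ` is integrable and bounded, `u` is continuous.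

Inside `U` the density `φ` is merely continuous, so `u` need not be `C¹` and `∂̄u = φ` is not
available by differentiation. Instead, near a point of `U`, let `F` be compactly supported and `C¹`
with `F = f` near that point. By the Cauchy–Pompeiu formula `F` is the Cauchy transform of `∂̄F`, so
`F - u` is the Cauchy transform of `∂̄F - φ`. This density vanishes near the point, and a Cauchy
transform is holomorphic off the support of its density.

For the Cauchy–Pompeiu formula, use polar coordinates: `2 e^{-iθ} ∂̄F` is the derivative of `F`
along the ray plus `i` times the derivative along the circle, and the latter integrates to zero.
-/

open MeasureTheory Set Metric Topology ContinuousLinearMap Complex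
open scoped Real Convolution

section Convolution

variable {𝕜 G V V' W : Type*} [NontriviallyNormedField 𝕜]
  [NormedAddCommGroup V] [NormedSpace 𝕜 V] [NormedAddCommGroup V'] [NormedSpace 𝕜 V']
  [NormedAddCommGroup W] [NormedSpace 𝕜 W]
  [MeasurableSpace G] {μ : Measure G}
  (L : V →L[𝕜] V' →L[𝕜] W) {f : G → V} {g : G → V'} {C : ℝ}

lemma convolutionExists_of_integrable_of_bounded [AddGroup G] [MeasurableAdd₂ G] [MeasurableNeg G]
    [SFinite μ] [μ.IsAddRightInvariant] (hf : Integrable f μ) (hg : AEStronglyMeasurable g μ)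
    (hC : ∀ x, ‖g x‖ ≤ C) : ConvolutionExists f g L μ := fun x =>
  ((hf.norm.const_mul ‖L‖).mul_const C).mono' (hf.1.convolution_integrand_snd L hg x)
    (ae_of_all _ fun t => L.le_of_opNorm₂_le_of_le le_rfl le_rfl (hC (x - t)))

variable [AddCommGroup G] [μ.IsAddLeftInvariant] [μ.IsNegInvariant]

lemma convolutionExists_of_bounded_of_integrable [MeasurableAdd₂ G] [MeasurableNeg G]
    [SFinite μ] (hf : AEStronglyMeasurable f μ) (hC : ∀ x, ‖f x‖ ≤ C) (hg : Integrable g μ) :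
    ConvolutionExists f g L μ := fun x =>
  convolutionExistsAt_flip.1 (convolutionExists_of_integrable_of_bounded L.flip hg hf hC x)

variable [NormedSpace ℝ W] [TopologicalSpace G] [IsTopologicalAddGroup G] [LocallyCompactSpace G]
  [BorelSpace G] [SecondCountableTopology G] [μ.Regular]

lemma continuous_convolution_of_integrable_of_bounded [NormedSpace ℝ V]
    (hf : Integrable f μ) (hg : AEStronglyMeasurable g μ) (hC : ∀ x, ‖g x‖ ≤ C) :
    Continuous (f ⋆[L, μ] g) := by
  have hC0 : 0 ≤ C := (norm_nonneg _).trans (hC 0)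
  refine continuous_of_uniform_approx_of_continuous fun u hu => ?_
  obtain ⟨ε, hε, hεu⟩ := Metric.mem_uniformity_dist.1 hu
  obtain ⟨δ, hδ, hδε⟩ : ∃ δ > 0, ‖L‖ * δ * C < ε := by
    obtain ⟨δ, hδ, h⟩ := exists_pos_mul_lt hε (‖L‖ * C)
    exact ⟨δ, hδ, by linarith⟩
  obtain ⟨f', hf'supp, hff', hf'cont, hf'⟩ := hf.exists_hasCompactSupport_integral_sub_le hδ
  have hg_loc : LocallyIntegrable g μ :=
    (memLp_top_of_bound hg C (ae_of_all _ hC)).locallyIntegrable le_top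
  refine ⟨f' ⋆[L, μ] g, hf'supp.continuous_convolution_left L hf'cont hg_loc, fun x => hεu ?_⟩
  calc dist ((f ⋆[L, μ] g) x) ((f' ⋆[L, μ] g) x)
      = ‖∫ t, L (f t - f' t) (g (x - t)) ∂μ‖ := by
        rw [dist_eq_norm, convolution_def, convolution_def, ← integral_sub
          (convolutionExists_of_integrable_of_bounded L hf hg hC x)
          (convolutionExists_of_integrable_of_bounded L hf' hg hC x)]
        simp only [map_sub, sub_apply]
    _ ≤ ∫ t, ‖L‖ * ‖f t - f' t‖ * C ∂μ :=
        norm_integral_le_of_norm_le (((hf.sub hf').norm.const_mul _).mul_const _)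
          (ae_of_all _ fun t => L.le_of_opNorm₂_le_of_le le_rfl le_rfl (hC (x - t)))
    _ = ‖L‖ * (∫ t, ‖f t - f' t‖ ∂μ) * C := by
        rw [integral_mul_const, integral_const_mul]
    _ ≤ ‖L‖ * δ * C := by gcongr
    _ < ε := hδε

lemma continuous_convolution_of_bounded_of_integrable [NormedSpace ℝ V']
    (hf : AEStronglyMeasurable f μ) (hC : ∀ x, ‖f x‖ ≤ C) (hg : Integrable g μ) :
    Continuous (f ⋆[L, μ] g) := by
  rw [← convolution_flip]
  exact continuous_convolution_of_integrable_of_bounded L.flip hg hf hC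

end Convolution

section Wirtinger

variable {E : Type*} [NormedAddCommGroup E] [NormedSpace ℂ E] {f F : ℂ → E} {z : ℂ}

/-- The Wirtinger derivative `∂F/∂z̄ = (∂F/∂x + i ∂F/∂y) / 2`. -/
noncomputable def dbar (F : ℂ → E) (z : ℂ) : E :=
  (2⁻¹ : ℂ) • (fderiv ℝ F z 1 + I • fderiv ℝ F z I)

lemma dbar_congr_of_eventuallyEq (h : F =ᶠ[𝓝 z] f) : dbar F z = dbar f z := by
  rw [dbar, dbar, h.fderiv_eq]

lemma dbar_eventuallyEq_of_eventuallyEq (h : F =ᶠ[𝓝 z] f) : dbar F =ᶠ[𝓝 z] dbar f :=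
  h.eventuallyEq_nhds.mono fun _ => dbar_congr_of_eventuallyEq

lemma dbar_smul_of_differentiableAt {g : ℂ → ℂ} (hg : DifferentiableAt ℂ g z)
    (hf : DifferentiableAt ℝ f z) : dbar (fun w => g w • f w) z = g z • dbar f z := by
  obtain ⟨hgℝ, hCR⟩ := differentiableAt_complex_iff_differentiableAt_real.1 hg
  simp only [dbar, fderiv_fun_smul hgℝ hf, add_apply, _root_.smul_apply, smulRight_apply, hCR,
    smul_eq_mul]
  match_scalars
  · ring
  · linear_combination (2⁻¹ * fderiv ℝ g z 1) * I_mul_I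
  · ring

lemma continuousOn_dbar {U : Set ℂ} (hU : IsOpen U) (hf : ContDiffOn ℝ 1 f U) :
    ContinuousOn (dbar f) U := by
  have := hf.continuousOn_fderiv_of_isOpen hU le_rfl
  unfold dbar
  fun_prop

lemma continuous_dbar (hF : ContDiff ℝ 1 F) : Continuous (dbar F) :=
  continuousOn_univ.1 (continuousOn_dbar isOpen_univ hF.contDiffOn)

lemma hasCompactSupport_dbar (hF : HasCompactSupport F) : HasCompactSupport (dbar F) :=
  (hF.fderiv ℝ).comp_left (g := fun L : ℂ →L[ℝ] E => (2⁻¹ : ℂ) • (L 1 + I • L I)) (by simp)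

lemma inv_smul_dbar_of_norm_eq_one {v : ℂ} (hv : ‖v‖ = 1) (F : ℂ → E) (z : ℂ) :
    v⁻¹ • dbar F z = (2⁻¹ : ℂ) • (fderiv ℝ F z v + I • fderiv ℝ F z (v * I)) := by
  have hvI : v = v.re • (1 : ℂ) + v.im • I := by simp
  have hvI' : v * I = v.re • I - v.im • (1 : ℂ) := by
    apply Complex.ext <;> simp
  have hinv : v⁻¹ = v.re - v.im * I := by
    rw [inv_def, normSq_eq_norm_sq, hv]
    apply Complex.ext <;> simp
  rw [hvI', map_sub, hinv, dbar]
  nth_rw 3 [hvI]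
  simp only [map_add, map_smul]
  simp only [← Complex.coe_smul]
  match_scalars
  · ring
  · linear_combination (-v.im / 2 : ℂ) * I_mul_I

end Wirtinger

section CauchyTransform

variable {E : Type*} [NormedAddCommGroup E] [NormedSpace ℂ E] {φ ψ : ℂ → E} {M N : ℝ}

/-- The Cauchy transform `z ↦ π⁻¹ ∫ φ(w) / (z - w) dA(w)`, normalised so that it inverts
`dbar` on compactly supported `C¹` functions. -/
noncomputable def cauchyTransform (φ : ℂ → E) (z : ℂ) : E :=
  (π : ℂ)⁻¹ • ∫ w, (z - w)⁻¹ • φ w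

lemma cauchyTransform_eq_convolution (φ : ℂ → E) :
    cauchyTransform φ = (π : ℂ)⁻¹ • ((fun z => z⁻¹) ⋆[lsmul ℂ ℂ, volume] φ) := by
  ext z
  rw [cauchyTransform, Pi.smul_apply, convolution_lsmul_swap]

lemma integrableOn_inv_ball (r : ℝ) : IntegrableOn (fun z : ℂ => z⁻¹) (ball 0 r) :=
  integrableOn_ball_of_norm_le_rpow (C := 1) (α := 1) (by simp) (by simp)
    (ae_of_all _ fun z => by simp [Real.rpow_neg_one]) measurable_inv.aestronglyMeasurable

lemma exists_integrable_add_bounded_eq_inv : ∃ k₁ k₂ : ℂ → ℂ,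
    Integrable k₁ ∧ Measurable k₂ ∧ (∀ z, ‖k₂ z‖ ≤ 1) ∧ k₁ + k₂ = fun z => z⁻¹ := by
  refine ⟨(ball 0 1).indicator fun z => z⁻¹, (ball 0 1)ᶜ.indicator fun z => z⁻¹,
    (integrableOn_inv_ball 1).integrable_indicator measurableSet_ball,
    measurable_inv.indicator measurableSet_ball.compl, fun z => ?_, indicator_self_add_compl _ _⟩
  by_cases hz : z ∈ ball 0 1
  · simp [hz]
  · rw [indicator_of_mem hz, norm_inv]
    exact inv_le_one_of_one_le₀ (by simpa using hz)

lemma convolutionExists_inv (hφ : Integrable φ) (hM : ∀ w, ‖φ w‖ ≤ M) :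
    ConvolutionExists (fun z => z⁻¹) φ (lsmul ℂ ℂ) volume := fun z => by
  obtain ⟨k₁, k₂, hk₁, hk₂, hk₂_le, hk⟩ := exists_integrable_add_bounded_eq_inv
  rw [← hk]
  have h₁ := convolutionExists_of_integrable_of_bounded (lsmul ℂ ℂ) hk₁ hφ.1 hM z
  have h₂ := convolutionExists_of_bounded_of_integrable (lsmul ℂ ℂ) hk₂.aestronglyMeasurable
    hk₂_le hφ z
  simp only [ConvolutionExistsAt, Pi.add_apply, map_add, add_apply]
  exact Integrable.add h₁ h₂

lemma continuous_convolution_inv (hφ : Integrable φ) (hM : ∀ w, ‖φ w‖ ≤ M) :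
    Continuous ((fun z => z⁻¹) ⋆[lsmul ℂ ℂ, volume] φ) := by
  obtain ⟨k₁, k₂, hk₁, hk₂, hk₂_le, hk⟩ := exists_integrable_add_bounded_eq_inv
  rw [← hk, (convolutionExists_of_integrable_of_bounded _ hk₁ hφ.1 hM).add_distrib
    (convolutionExists_of_bounded_of_integrable _ hk₂.aestronglyMeasurable hk₂_le hφ)]
  exact (continuous_convolution_of_integrable_of_bounded _ hk₁ hφ.1 hM).add
    (continuous_convolution_of_bounded_of_integrable _ hk₂.aestronglyMeasurable hk₂_le hφ)

lemma integrable_sub_inv_smul (hφ : Integrable φ) (hM : ∀ w, ‖φ w‖ ≤ M) (z : ℂ) :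
    Integrable fun w => (z - w)⁻¹ • φ w :=
  (convolutionExists_inv hφ hM z).integrable_swap

lemma continuous_cauchyTransform (hφ : Integrable φ) (hM : ∀ w, ‖φ w‖ ≤ M) :
    Continuous (cauchyTransform φ) := by
  rw [cauchyTransform_eq_convolution]
  exact (continuous_convolution_inv hφ hM).const_smul _

lemma cauchyTransform_sub (hφ : Integrable φ) (hM : ∀ w, ‖φ w‖ ≤ M) (hψ : Integrable ψ)
    (hN : ∀ w, ‖ψ w‖ ≤ N) (z : ℂ) :
    cauchyTransform (φ - ψ) z = cauchyTransform φ z - cauchyTransform ψ z := by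
  simp only [cauchyTransform, Pi.sub_apply, smul_sub,
    integral_sub (integrable_sub_inv_smul hφ hM z) (integrable_sub_inv_smul hψ hN z)]

lemma differentiableOn_cauchyTransform_compl_tsupport (hφ : Integrable φ) :
    DifferentiableOn ℂ (cauchyTransform φ) (tsupport φ)ᶜ := by
  intro z₀ hz₀
  obtain ⟨r, hr, hball⟩ := Metric.mem_nhds_iff.1 ((isClosed_tsupport φ).isOpen_compl.mem_nhds hz₀)
  have hfar : ∀ w, φ w ≠ 0 → ∀ z ∈ ball z₀ (r / 2), r / 2 ≤ ‖z - w‖ := by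
    intro w hw z hz
    have hwr : r ≤ dist w z₀ := not_lt.1 fun hlt => hball hlt (subset_tsupport φ hw)
    rw [mem_ball] at hz
    rw [← dist_eq_norm, dist_comm]
    linarith [dist_triangle w z z₀]
  have hmeas : ∀ z : ℂ, AEStronglyMeasurable fun w => (z - w)⁻¹ • φ w := fun z =>
    AEStronglyMeasurable.smul (by fun_prop) hφ.1
  have hderiv := hasDerivAt_integral_of_dominated_loc_of_deriv_le
    (F := fun z w => (z - w)⁻¹ • φ w) (F' := fun z w => (-((z - w) ^ 2)⁻¹) • φ w)
    (bound := fun w => ((r / 2) ^ 2)⁻¹ * ‖φ w‖)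
    (ball_mem_nhds z₀ (half_pos hr)) (Eventually.of_forall hmeas) ?_
    (AEStronglyMeasurable.smul (by fun_prop) hφ.1) ?_ (hφ.norm.const_mul _) ?_
  · exact (hderiv.2.differentiableAt.const_smul _).differentiableWithinAt
  · refine (hφ.norm.const_mul (r / 2)⁻¹).mono' (hmeas z₀) (ae_of_all _ fun w => ?_)
    by_cases hw : φ w = 0
    · simp [hw]
    rw [norm_smul, norm_inv]
    gcongr
    exact hfar w hw z₀ (mem_ball_self (half_pos hr))
  · refine ae_of_all _ fun w z hz => ?_
    by_cases hw : φ w = 0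
    · simp [hw]
    rw [norm_smul, norm_neg, norm_inv, norm_pow]
    gcongr
    exact hfar w hw z hz
  · refine ae_of_all _ fun w z hz => ?_
    by_cases hw : φ w = 0
    · simpa [hw] using hasDerivAt_const z (0 : E)
    have hne : z - w ≠ 0 := norm_pos_iff.1 ((half_pos hr).trans_le (hfar w hw z hz))
    simpa [neg_div] using (((hasDerivAt_id z).sub_const w).fun_inv hne).smul_const (φ w)

lemma tendsto_cauchyTransform_cocompact (hφ : Integrable φ) (hs : HasCompactSupport φ) :
    Tendsto (cauchyTransform φ) (cocompact ℂ) (𝓝 0) := by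
  obtain ⟨R, hR⟩ := hs.isCompact.isBounded.subset_closedBall 0
  have hlim : Tendsto (fun z : ℂ => (‖z‖ - R)⁻¹ * ∫ w, ‖φ w‖) (cocompact ℂ) (𝓝 0) := by
    rw [← zero_mul (∫ w, ‖φ w‖)]
    exact (tendsto_inv_atTop_zero.comp <| tendsto_atTop_add_const_right _ _
      (tendsto_norm_cocompact_atTop (E := ℂ))).mul_const _
  rw [← smul_zero (π : ℂ)⁻¹]
  refine Tendsto.const_smul (squeeze_zero_norm' ?_ hlim) _
  filter_upwards [(tendsto_norm_cocompact_atTop (E := ℂ)).eventually_gt_atTop R] with z hz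
  rw [← integral_const_mul]
  refine norm_integral_le_of_norm_le (hφ.norm.const_mul _) (ae_of_all _ fun w => ?_)
  by_cases hw : φ w = 0
  · simp [hw]
  have hwR : ‖w‖ ≤ R := mem_closedBall_zero_iff.1 (hR (subset_tsupport φ hw))
  have hle : ‖z‖ - R ≤ ‖z - w‖ := by linarith [norm_sub_norm_le z w]
  rw [norm_smul, norm_inv]
  exact mul_le_mul_of_nonneg_right (inv_anti₀ (sub_pos.2 hz) hle) (norm_nonneg _)

end CauchyTransform

section CauchyPompeiu

variable {E : Type*} [NormedAddCommGroup E]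

lemma circleMap_eq_add_smul (z : ℂ) (r θ : ℝ) :
    circleMap z r θ = z + r • circleMap 0 1 θ := by
  simp [circleMap]

section Real

variable [NormedSpace ℝ E]

lemma integral_Ioi_fderiv_add_smul [CompleteSpace E] {V : Type*} [NormedAddCommGroup V]
    [NormedSpace ℝ V] {F : V → E} (hF : ContDiff ℝ 1 F) (hs : HasCompactSupport F) (x : V) {v : V}
    (hv : v ≠ 0) : ∫ r in Ioi (0 : ℝ), fderiv ℝ F (x + r • v) v = -F x := by
  have hemb : IsClosedEmbedding fun r : ℝ => x + r • v :=
    (Homeomorph.addLeft x).isClosedEmbedding.comp (isClosedEmbedding_smul_left hv)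
  have hderiv : ∀ r : ℝ, deriv (fun r : ℝ => F (x + r • v)) r = fderiv ℝ F (x + r • v) v := by
    intro r
    have hline : HasDerivAt (fun r : ℝ => x + r • v) v r := by
      simpa using ((hasDerivAt_id r).smul_const v).const_add x
    exact ((hF.differentiable one_ne_zero _).hasFDerivAt.comp_hasDerivAt r hline).deriv
  have hFTC := HasCompactSupport.integral_Ioi_deriv_eq
    (hF.comp (by fun_prop : ContDiff ℝ 1 fun r : ℝ => x + r • v)) (hs.comp_isClosedEmbedding hemb) 0
  simpa [Function.comp_def, hderiv] using hFTC

lemma integral_Ioo_fderiv_circleMap_tangential [CompleteSpace E] {F : ℂ → E}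
    (hF : ContDiff ℝ 1 F) (z : ℂ) {r : ℝ} (hr : r ≠ 0) :
    ∫ θ in Ioo (-π) π, fderiv ℝ F (circleMap z r θ) (circleMap 0 1 θ * I) = 0 := by
  have hcont : Continuous fun θ => fderiv ℝ F (circleMap z r θ) (circleMap 0 1 θ * I) :=
    ((hF.continuous_fderiv one_ne_zero).comp (by fun_prop)).clm_apply (by fun_prop)
  have hderiv : ∀ θ, HasDerivAt (fun θ => F (circleMap z r θ))
      (r • fderiv ℝ F (circleMap z r θ) (circleMap 0 1 θ * I)) θ := by
    intro θ
    rw [← map_smul, ← smul_mul_assoc, ← zero_add (r • _), ← circleMap_eq_add_smul]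
    exact (hF.differentiable one_ne_zero _).hasFDerivAt.comp_hasDerivAt θ
      (hasDerivAt_circleMap z r θ)
  have hFTC := intervalIntegral.integral_eq_sub_of_hasDerivAt (a := -π) (b := π)
    (fun θ _ => hderiv θ) ((hcont.const_smul r).intervalIntegrable _ _)
  have hperiod : circleMap z r π = circleMap z r (-π) := by
    simpa [two_mul] using periodic_circleMap z r (-π)
  rw [hperiod, sub_self, intervalIntegral.integral_smul, smul_eq_zero_iff_right hr,
    intervalIntegral.integral_of_le (by linarith [Real.pi_pos]), integral_Ioc_eq_integral_Ioo]
    at hFTC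
  exact hFTC

lemma integrableOn_clm_apply_circleMap {L : ℂ → ℂ →L[ℝ] E} (hL : Continuous L)
    (hs : HasCompactSupport L) {v : ℝ → ℂ} (hv : Continuous v) (z : ℂ) :
    IntegrableOn (fun p : ℝ × ℝ => L (circleMap z p.1 p.2) (v p.2)) (Ioi 0 ×ˢ Ioo (-π) π) := by
  obtain ⟨R, hR⟩ := hs.isCompact.isBounded.subset_closedBall z
  have hcircle : Continuous fun p : ℝ × ℝ => circleMap z p.1 p.2 := by
    unfold circleMap
    fun_prop
  have hcont : Continuous fun p : ℝ × ℝ => L (circleMap z p.1 p.2) (v p.2) :=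
    (hL.comp hcircle).clm_apply (by fun_prop)
  refine (hcont.continuousOn.integrableOn_compact (K := Icc 0 R ×ˢ Icc (-π) π)
    (isCompact_Icc.prod isCompact_Icc)).of_forall_sdiff_eq_zero
    (measurableSet_Ioi.prod measurableSet_Ioo) ?_
  rintro ⟨r, θ⟩ ⟨⟨hr, hθ⟩, hnot⟩
  have hrR : R < r := not_le.1 fun hle => hnot ⟨⟨le_of_lt hr, hle⟩, Ioo_subset_Icc_self hθ⟩
  have hzero : L (circleMap z r θ) = 0 := image_eq_zero_of_notMem_tsupport fun hmem => by
    have hle : |r| ≤ R := by simpa [dist_eq_norm] using hR hmem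
    exact hrR.not_ge ((le_abs_self r).trans hle)
  simp [hzero]

end Real

variable [NormedSpace ℂ E] {F : ℂ → E}

lemma integral_sub_inv_smul_eq_integral_circleMap (G : ℂ → E) (z : ℂ) :
    ∫ w, (w - z)⁻¹ • G w =
      ∫ p in Ioi (0 : ℝ) ×ˢ Ioo (-π) π, (circleMap 0 1 p.2)⁻¹ • G (circleMap z p.1 p.2) := by
  rw [← integral_add_left_eq_self _ z, ← Complex.integral_comp_polarCoord_symm]
  refine setIntegral_congr_fun polarCoord.open_target.measurableSet ?_
  rintro ⟨r, θ⟩ ⟨hr, -⟩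
  have hr0 : (r : ℂ) ≠ 0 := ofReal_ne_zero.2 (ne_of_gt hr)
  have hpolar : Complex.polarCoord.symm (r, θ) = r * circleMap 0 1 θ := by
    simp [circleMap, exp_mul_I]
  simp only [add_sub_cancel_left, circleMap_eq_add_smul z r, real_smul, hpolar]
  rw [← Complex.coe_smul, smul_smul, mul_inv, mul_inv_cancel_left₀ hr0]

variable [CompleteSpace E]

lemma setIntegral_fderiv_circleMap_radial (hF : ContDiff ℝ 1 F) (hs : HasCompactSupport F) (z : ℂ) :
    ∫ p in Ioi (0 : ℝ) ×ˢ Ioo (-π) π, fderiv ℝ F (circleMap z p.1 p.2) (circleMap 0 1 p.2) =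
      -(2 * π) • F z := by
  have hint := integrableOn_clm_apply_circleMap (hF.continuous_fderiv one_ne_zero) (hs.fderiv ℝ)
    (continuous_circleMap 0 1) z
  rw [IntegrableOn, Measure.volume_eq_prod, ← Measure.prod_restrict] at hint
  rw [Measure.volume_eq_prod, ← Measure.prod_restrict, integral_prod_symm _ hint]
  have hradial : ∀ θ, ∫ r in Ioi (0 : ℝ), fderiv ℝ F (circleMap z r θ) (circleMap 0 1 θ) =
      -F z := fun θ => by
    simp only [circleMap_eq_add_smul z]
    exact integral_Ioi_fderiv_add_smul hF hs z (circleMap_ne_center one_ne_zero)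
  rw [setIntegral_congr_fun measurableSet_Ioo fun θ _ => hradial θ, setIntegral_const,
    Real.volume_real_Ioo_of_le (by linarith [Real.pi_pos]), smul_neg, neg_smul, sub_neg_eq_add,
    two_mul]

lemma setIntegral_fderiv_circleMap_tangential (hF : ContDiff ℝ 1 F)
    (hs : HasCompactSupport F) (z : ℂ) :
    ∫ p in Ioi (0 : ℝ) ×ˢ Ioo (-π) π, fderiv ℝ F (circleMap z p.1 p.2) (circleMap 0 1 p.2 * I) =
      0 := by
  have hint := integrableOn_clm_apply_circleMap (hF.continuous_fderiv one_ne_zero) (hs.fderiv ℝ)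
    ((continuous_circleMap 0 1).mul_const I) z
  rw [Measure.volume_eq_prod, setIntegral_prod _ hint]
  exact setIntegral_eq_zero_of_forall_eq_zero fun r hr =>
    integral_Ioo_fderiv_circleMap_tangential hF z (ne_of_gt hr)

lemma integral_sub_inv_smul_dbar (hF : ContDiff ℝ 1 F) (hs : HasCompactSupport F) (z : ℂ) :
    ∫ w, (w - z)⁻¹ • dbar F w = -(π : ℂ) • F z := by
  have hdF := hF.continuous_fderiv one_ne_zero
  have hradial := integrableOn_clm_apply_circleMap hdF (hs.fderiv ℝ) (continuous_circleMap 0 1) z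
  have hangular := integrableOn_clm_apply_circleMap hdF (hs.fderiv ℝ)
    ((continuous_circleMap 0 1).mul_const I) z
  have hunit : ∀ θ, ‖circleMap 0 1 θ‖ = 1 := fun θ => by simp
  simp only [integral_sub_inv_smul_eq_integral_circleMap, inv_smul_dbar_of_norm_eq_one (hunit _)]
  rw [integral_smul, integral_add hradial (hangular.fun_smul I), integral_smul,
    setIntegral_fderiv_circleMap_radial hF hs, setIntegral_fderiv_circleMap_tangential hF hs,
    ← Complex.coe_smul]
  push_cast
  module

lemma cauchyTransform_dbar (hF : ContDiff ℝ 1 F) (hs : HasCompactSupport F) :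
    cauchyTransform (dbar F) = F := by
  ext z
  have hneg : ∀ w, (z - w)⁻¹ • dbar F w = -((w - z)⁻¹ • dbar F w) := fun w => by
    rw [← neg_sub w z, inv_neg, neg_smul]
  simp only [cauchyTransform, hneg, integral_neg, integral_sub_inv_smul_dbar hF hs, neg_smul,
    neg_neg]
  exact inv_smul_smul₀ (ofReal_ne_zero.2 Real.pi_ne_zero) (F z)

end CauchyPompeiu

lemma exists_contDiff_hasCompactSupport_eventuallyEq {V W : Type*}
    [NormedAddCommGroup V] [NormedSpace ℝ V] [FiniteDimensional ℝ V]
    [NormedAddCommGroup W] [NormedSpace ℝ W] {n : ℕ} {f : V → W} {x : V}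
    (hf : ContDiffAt ℝ n f x) :
    ∃ F : V → W, ContDiff ℝ n F ∧ HasCompactSupport F ∧ F =ᶠ[𝓝 x] f := by
  obtain ⟨r, hr, hfr⟩ := nhds_basis_closedBall.mem_iff.1 (hf.eventually (by simp))
  let χ : ContDiffBump x := ⟨r / 2, r, half_pos hr, half_lt_self hr⟩
  refine ⟨fun y => χ y • f y, ?_, χ.hasCompactSupport.smul_right, ?_⟩
  · refine contDiff_iff_contDiffAt.2 fun y => ?_
    by_cases hy : y ∈ tsupport χ
    · exact χ.contDiff.contDiffAt.smul (hfr (χ.tsupport_eq ▸ hy))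
    · have hzero : (fun y => χ y • f y) =ᶠ[𝓝 y] 0 := by
        filter_upwards [notMem_tsupport_iff_eventuallyEq.1 hy] with y hy
        simp [hy]
      exact contDiffAt_const.congr_of_eventuallyEq hzero
  · filter_upwards [χ.eventuallyEq_one] with y hy
    rw [hy, Pi.one_apply, one_smul]

section Correction

variable {E : Type*} [NormedAddCommGroup E] [NormedSpace ℂ E] [CompleteSpace E]

lemma differentiableAt_sub_cauchyTransform {f φ : ℂ → E} {M : ℝ} {z : ℂ}
    (hf : ContDiffAt ℝ 1 f z) (hφf : dbar f =ᶠ[𝓝 z] φ) (hφ : Integrable φ)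
    (hM : ∀ w, ‖φ w‖ ≤ M) : DifferentiableAt ℂ (fun w => f w - cauchyTransform φ w) z := by
  obtain ⟨F, hF, hFs, hFf⟩ := exists_contDiff_hasCompactSupport_eventuallyEq (n := 1) hf
  have hdF := continuous_dbar hF
  have hdFs := hasCompactSupport_dbar hFs
  have hdFi : Integrable (dbar F) := hdF.integrable_of_hasCompactSupport hdFs
  obtain ⟨N, hN⟩ := hdF.bounded_above_of_compact_support hdFs
  have hz : z ∉ tsupport (dbar F - φ) := by
    rw [notMem_tsupport_iff_eventuallyEq]
    filter_upwards [dbar_eventuallyEq_of_eventuallyEq hFf, hφf] with w hFw hφw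
    simp [hFw, hφw]
  have hdiff : DifferentiableAt ℂ (cauchyTransform (dbar F - φ)) z :=
    (differentiableOn_cauchyTransform_compl_tsupport (hdFi.sub hφ)).differentiableAt
      ((isClosed_tsupport _).isOpen_compl.mem_nhds hz)
  refine hdiff.congr_of_eventuallyEq ?_
  filter_upwards [hFf] with w hw
  rw [cauchyTransform_sub hdFi hN hφ hM, cauchyTransform_dbar hF hFs, hw]

theorem stmt_14_general {U : Set ℂ} (hU : IsOpen U) (hUbdd : Bornology.IsBounded U) {f : ℂ → E}
    (hf : ContDiffOn ℝ 1 f U) {C : ℝ} (hC : ∀ z ∈ U, ‖dbar f z‖ ≤ C) :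
    ∃ u : ℂ → E, Continuous u ∧ DifferentiableOn ℂ (fun z => f z - u z) U ∧
      DifferentiableOn ℂ u (closure U)ᶜ ∧ Tendsto u (cocompact ℂ) (𝓝 0) := by
  set φ : ℂ → E := U.indicator (dbar f)
  have hφ : Integrable φ := IntegrableOn.integrable_indicator
    (IntegrableOn.of_bound hUbdd.measure_lt_top
      ((continuousOn_dbar hU hf).aestronglyMeasurable hU.measurableSet) C
      (ae_restrict_of_forall_mem hU.measurableSet hC)) hU.measurableSet
  have hbound : ∀ w, ‖φ w‖ ≤ max C 0 := fun w => by
    by_cases hw : w ∈ U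
    · simp [φ, hw, hC w hw]
    · simp [φ, hw]
  have hsupp : tsupport φ ⊆ closure U := closure_mono support_indicator_subset
  refine ⟨cauchyTransform φ, continuous_cauchyTransform hφ hbound, fun z hz => ?_,
    (differentiableOn_cauchyTransform_compl_tsupport hφ).mono (compl_subset_compl.2 hsupp),
    tendsto_cauchyTransform_cocompact hφ
      (hUbdd.isCompact_closure.of_isClosed_subset (isClosed_tsupport φ) hsupp)⟩
  have hzU := hU.mem_nhds hz
  have hφf : dbar f =ᶠ[𝓝 z] φ := mem_of_superset hzU fun w hw => (indicator_of_mem hw _).symm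
  exact (differentiableAt_sub_cauchyTransform (hf.contDiffAt hzU) hφf hφ
    hbound).differentiableWithinAt

end Correction

/-- The product of a function `g`, continuous on the closure of a nonempty bounded
open set `U ⊆ ℂ` and holomorphic on `U`, with a real-`C¹` function `h`, can be
corrected by a globally continuous function `u`, holomorphic off the closure of `U`
and vanishing at infinity, so that `g·h − u` is holomorphic on `U`. -/
theorem stmt_14 (U : Set ℂ) (hUopen : IsOpen U) (hUne : U.Nonempty)
    (hUbdd : Bornology.IsBounded U)
    (g : ℂ → ℂ) (hg : ContinuousOn g (closure U)) (hgd : DifferentiableOn ℂ g U)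
    (h : ℂ → ℂ) (hh : ContDiff ℝ 1 h) :
    ∃ u : ℂ → ℂ, Continuous u ∧
      DifferentiableOn ℂ (fun z => g z * h z - u z) U ∧
      DifferentiableOn ℂ u (closure U)ᶜ ∧
      Tendsto u (cocompact ℂ) (nhds 0) := by
  obtain ⟨C, hC⟩ := hUbdd.isCompact_closure.exists_bound_of_continuousOn
    (hg.smul (continuous_dbar hh).continuousOn)
  refine stmt_14_general (C := C) hUopen hUbdd
    (((hgd.contDiffOn hUopen).restrict_scalars ℝ).mul hh.contDiffOn) fun z hz => ?_
  have hgz := hgd.differentiableAt (hUopen.mem_nhds hz)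
  have hdbar : dbar (fun w => g w * h w) z = g z * dbar h z :=
    dbar_smul_of_differentiableAt hgz (hh.differentiable one_ne_zero z)
  rw [hdbar]
  exact hC z (subset_closure hz)
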